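/- For every prime p, the convolution identity Φ_p(1,0,0) * Φ_p(−1,0,0) = (p² + p + 1)·Φ_p(0,0,0) + Φ_p(1,0,−1) holds, where Φ_p(0,0,0) is the characteristic function of K_p. -/

import Mathlib

open MeasureTheory

noncomputable section

variable (p : ℕ) [Fact p.Prime]

/-- The diagonal element `diag(p^a, p^b, p^c)` of `GL₃(ℚ_p)`. -/
def padicDiag (a b c : ℤ) : GL (Fin 3) ℚ_[p] := by
  have hp : (p : ℚ_[p]) ≠ 0 := by
    exact_mod_cast (Nat.cast_ne_zero (R := ℚ_[p])).mpr (Fact.out : p.Prime).ne_zero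
  refine ⟨Matrix.diagonal ![(p : ℚ_[p]) ^ a, (p : ℚ_[p]) ^ b, (p : ℚ_[p]) ^ c],
    Matrix.diagonal ![(p : ℚ_[p]) ^ (-a), (p : ℚ_[p]) ^ (-b), (p : ℚ_[p]) ^ (-c)], ?_, ?_⟩ <;>
  · rw [Matrix.diagonal_mul_diagonal]
    ext i j
    fin_cases i <;> fin_cases j <;>
      simp [zpow_neg, mul_inv_cancel₀ (zpow_ne_zero _ hp), inv_mul_cancel₀ (zpow_ne_zero _ hp)]

/-- `K_p = GL₃(ℤ_p)`, viewed as the image of `GL₃(ℤ_p)` inside `GL₃(ℚ_p)`. -/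
def padicK : Set (GL (Fin 3) ℚ_[p]) :=
  Set.range fun u : (Matrix (Fin 3) (Fin 3) ℤ_[p])ˣ =>
    Units.map (RingHom.toMonoidHom (RingHom.mapMatrix (PadicInt.Coe.ringHom (p := p)))) u

/-- The double coset `K_p · diag(p^a, p^b, p^c) · K_p`. -/
def padicDoubleCoset (a b c : ℤ) : Set (GL (Fin 3) ℚ_[p]) :=
  {x | ∃ k₁ ∈ padicK p, ∃ k₂ ∈ padicK p, x = k₁ * padicDiag p a b c * k₂}

/-- `Φ_p(a,b,c)`: the characteristic function of `K_p(a,b,c)`. -/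
def padicPhi (a b c : ℤ) : GL (Fin 3) ℚ_[p] → ℝ :=
  (padicDoubleCoset p a b c).indicator fun _ => (1 : ℝ)

instance : MeasurableSpace (GL (Fin 3) ℚ_[p]) := borel _

/-- Convolution of functions on `GL₃(ℚ_p)` with respect to a measure `μ`. -/
def padicConv (μ : Measure (GL (Fin 3) ℚ_[p])) (f h : GL (Fin 3) ℚ_[p] → ℝ) :
    GL (Fin 3) ℚ_[p] → ℝ :=
  fun x => ∫ y, f y * h (y⁻¹ * x) ∂μ

open DoubleCoset
open Matrix (GeneralLinearGroup)
open IsLocalRing (ResidueField residue maximalIdeal)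
open scoped Pointwise Matrix LinearAlgebra.Projectivization MatrixGroups

/-!
Let `S = KgK` with `K = GL₃(ℤ_p)` and `g = diag(p, 1, 1)`. The convolution at `x` is the measure of
`S ∩ xS`, that is, the number of cosets `yK` with `y` in both `S` and `xS`. Think of cosets of `K`
as lattices. The group `K` acts on the cosets in `S` as `GL₃(𝔽_p)` does on a projective plane over
`𝔽_p`, so there are `p² + p + 1` of them, which is the value at `x ∈ K`. This action is doubly
transitive, so the pairs of distinct cosets in `S⁻¹` form a single orbit; since `y ∈ S ∩ xS` makes
`(y⁻¹K, y⁻¹xK)` such a pair when `x ∉ K`, the set `S ∩ xS` is empty unless `x` lies in `K` or in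
`K diag(p, 1, p⁻¹) K`. Finally, if `xK ≠ K` and `S ∩ xS` contained two distinct cosets, double
transitivity would move them to two coordinate neighbours of a lattice; together these detect every
column of the transition matrix, which would force it to be integral. Hence the remaining value is
`1`.
-/

section DoubleCosets

variable {G : Type*} [Group G]

lemma doubleCoset_inv (K : Subgroup G) (g : G) :
    (doubleCoset g K K)⁻¹ = doubleCoset g⁻¹ K K := by
  simp only [doubleCoset, mul_inv_rev, Set.inv_singleton, inv_coe_set, mul_assoc]

lemma mul_mem_doubleCoset_iff_left {H K : Subgroup G} {g h x : G} (hh : h ∈ H) :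
    h * x ∈ doubleCoset g (H : Set G) K ↔ x ∈ doubleCoset g (H : Set G) K := by
  have : h • doubleCoset g (H : Set G) K = doubleCoset g H K := by
    rw [doubleCoset, ← smul_mul_assoc, ← smul_mul_assoc, smul_coe_set hh]
  rw [← Set.smul_mem_smul_set_iff (a := h) (x := x), this, smul_eq_mul]

lemma mul_mem_doubleCoset_iff_right {H K : Subgroup G} {g k x : G} (hk : k ∈ K) :
    x * k ∈ doubleCoset g (H : Set G) K ↔ x ∈ doubleCoset g (H : Set G) K := by
  have : MulOpposite.op k • doubleCoset g (H : Set G) K = doubleCoset g H K := by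
    rw [doubleCoset, ← mul_smul_comm, op_smul_coe_set hk]
  rw [← Set.smul_mem_smul_set_iff (a := MulOpposite.op k) (x := x), this, op_smul_eq_mul]

lemma doubleCoset_mul_right {H K : Subgroup G} {g k : G} (hk : k ∈ K) :
    doubleCoset (g * k) (H : Set G) K = doubleCoset g (H : Set G) K :=
  doubleCoset_eq_of_mem ((mul_mem_doubleCoset_iff_right hk).2 (mem_doubleCoset_self H K g))

lemma doubleCoset_one (K : Subgroup G) : doubleCoset 1 (K : Set G) K = K := by
  rw [doubleCoset, Set.singleton_one, mul_one, coe_mul_coe]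

lemma doubleCoset_eq_preimage_orbit (H K : Subgroup G) (g : G) :
    doubleCoset g H K = (QuotientGroup.mk : G → G ⧸ K) ⁻¹' MulAction.orbit H (g : G ⧸ K) := by
  ext x
  simp only [mem_doubleCoset, Set.mem_preimage, MulAction.mem_orbit_iff, Subtype.exists]
  constructor
  · rintro ⟨h, hh, k, hk, rfl⟩
    exact ⟨h, hh, (QuotientGroup.mk_mul_of_mem (h * g) hk).symm⟩
  · rintro ⟨h, hh, hx⟩
    exact ⟨h, hh, (h * g)⁻¹ * x, QuotientGroup.eq.1 hx, by group⟩

lemma mem_conj_smul_iff {K : Subgroup G} {g x : G} :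
    x ∈ MulAut.conj g • K ↔ g⁻¹ * x * g ∈ K := by
  rw [Subgroup.mem_pointwise_smul_iff_inv_smul_mem, ← map_inv, MulAut.smul_def, MulAut.conj_apply,
    inv_inv]

lemma ncard_orbit_mk (H K : Subgroup G) (g : G) :
    (MulAction.orbit H (g : G ⧸ K)).ncard = (MulAut.conj g • K).relIndex H := by
  rw [← MulAction.index_stabilizer, Subgroup.relIndex]
  congr 1
  ext h
  have : h • (g : G ⧸ K) = ((h * g : G) : G ⧸ K) := rfl
  rw [MulAction.mem_stabilizer_iff, Subgroup.mem_subgroupOf, mem_conj_smul_iff, this, eq_comm,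
    QuotientGroup.eq, mul_assoc]

end DoubleCosets

section Measure

variable {G : Type*} [Group G] {K : Subgroup G}

lemma preimage_mk_eq_biUnion_smul (s : Set (G ⧸ K)) :
    (QuotientGroup.mk : G → G ⧸ K) ⁻¹' s = ⋃ q ∈ s, q.out • (K : Set G) := by
  ext x
  simp only [Set.mem_preimage, Set.mem_iUnion, Set.mem_smul_set_iff_inv_smul_mem, smul_eq_mul,
    SetLike.mem_coe, ← QuotientGroup.eq, QuotientGroup.out_eq', exists_prop, exists_eq_right]

lemma finite_orbit_mk {H K : Subgroup G} {g : G} (h : (MulAut.conj g • K).relIndex H ≠ 0) :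
    (MulAction.orbit H (g : G ⧸ K)).Finite :=
  Set.finite_of_ncard_ne_zero (by rwa [ncard_orbit_mk])

variable [MeasurableSpace G] [MeasurableMul G]

lemma measurableSet_preimage_mk (hK : MeasurableSet (K : Set G)) {s : Set (G ⧸ K)}
    (hs : s.Countable) : MeasurableSet ((QuotientGroup.mk : G → G ⧸ K) ⁻¹' s) := by
  rw [preimage_mk_eq_biUnion_smul]
  exact .biUnion hs fun q _ => hK.const_smul q.out

lemma measure_preimage_mk (μ : Measure G) [μ.IsMulLeftInvariant] (hK : MeasurableSet (K : Set G))
    {s : Set (G ⧸ K)} (hs : s.Countable) :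
    μ ((QuotientGroup.mk : G → G ⧸ K) ⁻¹' s) = s.encard * μ K := by
  rw [preimage_mk_eq_biUnion_smul, measure_biUnion hs _ fun q _ => hK.const_smul q.out]
  · simp only [measure_smul, ENNReal.tsum_set_const]
  · intro q _ r _ hqr
    refine Set.disjoint_left.2 fun x hq hr => hqr ?_
    rw [Set.mem_smul_set_iff_inv_smul_mem, smul_eq_mul, SetLike.mem_coe, ← QuotientGroup.eq,
      QuotientGroup.out_eq'] at hq hr
    exact hq.trans hr.symm

lemma measurableSet_doubleCoset {H : Subgroup G} (hK : MeasurableSet (K : Set G)) {g : G}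
    (h : (MulAut.conj g • K).relIndex H ≠ 0) : MeasurableSet (doubleCoset g (H : Set G) K) := by
  rw [doubleCoset_eq_preimage_orbit]
  exact measurableSet_preimage_mk hK (finite_orbit_mk h).countable

lemma measure_doubleCoset {H : Subgroup G} (μ : Measure G) [μ.IsMulLeftInvariant]
    (hK : MeasurableSet (K : Set G)) {g : G} (h : (MulAut.conj g • K).relIndex H ≠ 0) :
    μ (doubleCoset g (H : Set G) K) = (MulAut.conj g • K).relIndex H * μ K := by
  rw [doubleCoset_eq_preimage_orbit, measure_preimage_mk μ hK (finite_orbit_mk h).countable,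
    ← ncard_orbit_mk, ← (finite_orbit_mk h).cast_ncard_eq, ENat.toENNReal_coe]

lemma integral_indicator_mul_indicator_inv_mul (μ : Measure G) {s t : Set G} (hs : MeasurableSet s)
    (ht : MeasurableSet t⁻¹) (x : G) :
    ∫ y, s.indicator (1 : G → ℝ) y * t.indicator (1 : G → ℝ) (y⁻¹ * x) ∂μ =
      μ.real (s ∩ x • t⁻¹) := by
  have (y : G) : s.indicator (1 : G → ℝ) y * t.indicator (1 : G → ℝ) (y⁻¹ * x) =
      (s ∩ x • t⁻¹).indicator 1 y := by
    have : y⁻¹ * x ∈ t ↔ y ∈ x • t⁻¹ := by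
      rw [Set.mem_smul_set_iff_inv_smul_mem, Set.mem_inv, smul_eq_mul, mul_inv_rev, inv_inv]
    rw [Set.inter_indicator_one, Pi.mul_apply]
    classical
    simp only [Set.indicator_apply, this, Pi.one_apply]
  simp only [this, integral_indicator_one (hs.inter (ht.const_smul x))]

end Measure

section Minuscule

variable {G : Type*} [Group G]

/-- The stabiliser in `K` of the point `gK` of `G ⧸ K`. -/
def cosetStabilizer (K : Subgroup G) (g : G) : Subgroup G := K ⊓ MulAut.conj g • K

/-- The action of `K` on the set of cosets `xK` contained in `KgK` is doubly transitive. This is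
encoded by a representative `w` of the double coset, modulo the stabiliser of `gK`, that contains
all elements of `K` outside this stabiliser. -/
def IsTwoTransitiveOn (K : Subgroup G) (g w : G) : Prop :=
  ∀ k ∈ K, k ∈ MulAut.conj g • K ∨
    k ∈ doubleCoset w (cosetStabilizer K g : Set G) (cosetStabilizer K g)

lemma smul_conj_smul (f : MulAut G) (K : Subgroup G) (g : G) :
    f • MulAut.conj g • K = MulAut.conj (f g) • f • K := by
  rw [smul_smul, smul_smul]
  congr 1
  ext x
  simp only [MulAut.mul_apply, MulAut.conj_apply, map_mul, map_inv]

lemma smul_cosetStabilizer (f : MulAut G) (K : Subgroup G) (g : G) :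
    f • cosetStabilizer K g = cosetStabilizer (f • K) (f g) := by
  rw [cosetStabilizer, cosetStabilizer, Subgroup.smul_inf, smul_conj_smul]

lemma IsTwoTransitiveOn.smul {K : Subgroup G} {g w : G} (h : IsTwoTransitiveOn K g w)
    (f : MulAut G) : IsTwoTransitiveOn (f • K) (f g) (f w) := by
  intro x hx
  obtain ⟨k, hk, rfl⟩ := Subgroup.mem_smul_pointwise_iff_exists _ _ _ |>.1 hx
  rw [← smul_conj_smul, ← smul_cosetStabilizer]
  refine (h k hk).imp (Subgroup.smul_mem_pointwise_smul _ f _) fun hk => ?_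
  obtain ⟨a, ha, b, hb, rfl⟩ := mem_doubleCoset.1 hk
  refine mem_doubleCoset.2 ⟨f a, Subgroup.smul_mem_pointwise_smul _ f _ ha, f b,
    Subgroup.smul_mem_pointwise_smul _ f _ hb, ?_⟩
  simp only [MulAut.smul_def, map_mul]

/-- The abstract properties of a minuscule element `g` (such as `diag(p, 1, …, 1)`) relative to the
maximal compact subgroup `K` and a Weyl group element `w` moving `gK`. In terms of the cosets of
`K`, with the neighbours of `xK` being the cosets contained in `xKgK`, the last field says that `xK`
is determined by its two neighbours `xgK` and `xwgK`. -/
structure IsMinuscule (K : Subgroup G) (g w : G) : Prop where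
  weyl_mem : w ∈ K
  conj_weyl_notMem : g * w * g⁻¹ ∉ K
  isTwoTransitiveOn : IsTwoTransitiveOn K g w
  isTwoTransitiveOn_inv : IsTwoTransitiveOn K g⁻¹ w
  mem_of_mul_mem : ∀ x, x * g ∈ doubleCoset g (K : Set G) K →
    x * w * g ∈ doubleCoset g (K : Set G) K → x ∈ K

variable {K : Subgroup G} {g w x y z : G}

lemma mem_doubleCoset_of_mem_inter (hg : IsTwoTransitiveOn K g⁻¹ w) (hx : x ∉ K)
    (hy : y ∈ doubleCoset g (K : Set G) K) (hxy : x⁻¹ * y ∈ doubleCoset g (K : Set G) K) :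
    x ∈ doubleCoset (g * w * g⁻¹) (K : Set G) K := by
  obtain ⟨a, ha, b, hb, rfl⟩ := mem_doubleCoset.1 hy
  obtain ⟨c, hc, d, hd, h⟩ := mem_doubleCoset.1 hxy
  have hx_eq : x = a * (g * (b * d⁻¹) * g⁻¹) * c⁻¹ := by
    rw [inv_mul_eq_iff_eq_mul] at h
    rw [eq_mul_inv_iff_mul_eq, ← mul_left_inj (g * d)]
    simpa [mul_assoc] using h.symm
  rcases hg _ (K.mul_mem hb (K.inv_mem hd)) with hδ | hδ
  · rw [mem_conj_smul_iff, inv_inv] at hδ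
    exact absurd (hx_eq ▸ K.mul_mem (K.mul_mem ha hδ) (K.inv_mem hc)) hx
  · obtain ⟨h, hh, h', hh', hδ⟩ := mem_doubleCoset.1 hδ
    have hh := mem_conj_smul_iff.1 hh.2
    have hh' := mem_conj_smul_iff.1 hh'.2
    rw [inv_inv] at hh hh'
    refine mem_doubleCoset.2 ⟨_, K.mul_mem ha hh, _, K.mul_mem hh' (K.inv_mem hc), ?_⟩
    rw [hx_eq, hδ]
    group

namespace IsMinuscule

lemma inv_mul_mem_conj (hg : IsMinuscule K g w) {a b : G} (ha : a ∈ K) (hb : b ∈ K) (hx : x ∉ K)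
    (hxa : x⁻¹ * (a * g) ∈ doubleCoset g (K : Set G) K)
    (hxb : x⁻¹ * (b * g) ∈ doubleCoset g (K : Set G) K) : a⁻¹ * b ∈ MulAut.conj g • K := by
  refine (hg.isTwoTransitiveOn _ (K.mul_mem (K.inv_mem ha) hb)).resolve_right fun hab => hx ?_
  obtain ⟨h, hh, h', hh', hab⟩ := mem_doubleCoset.1 hab
  have hxh : x⁻¹ * (a * h) ∈ K := by
    apply hg.mem_of_mul_mem
    · rw [← mul_mem_doubleCoset_iff_right (mem_conj_smul_iff.1 hh.2)] at hxa
      simpa only [mul_assoc, mul_inv_cancel_left] using hxa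
    · rw [← mul_mem_doubleCoset_iff_right (mem_conj_smul_iff.1 (inv_mem hh'.2)),
        inv_mul_eq_iff_eq_mul.1 hab] at hxb
      simpa only [mul_assoc, mul_inv_cancel_left] using hxb
  rwa [mul_mem_cancel_right (K.mul_mem ha hh.1), inv_mem_iff] at hxh

lemma inv_mul_mem (hg : IsMinuscule K g w) (hx : x ∉ K)
    (hy : y ∈ doubleCoset g (K : Set G) K) (hxy : x⁻¹ * y ∈ doubleCoset g (K : Set G) K)
    (hz : z ∈ doubleCoset g (K : Set G) K) (hxz : x⁻¹ * z ∈ doubleCoset g (K : Set G) K) :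
    y⁻¹ * z ∈ K := by
  obtain ⟨a, ha, b, hb, rfl⟩ := mem_doubleCoset.1 hy
  obtain ⟨c, hc, d, hd, rfl⟩ := mem_doubleCoset.1 hz
  rw [← mul_assoc, mul_mem_doubleCoset_iff_right hb] at hxy
  rw [← mul_assoc, mul_mem_doubleCoset_iff_right hd] at hxz
  have hac := mem_conj_smul_iff.1 (hg.inv_mul_mem_conj ha hc hx hxy hxz)
  simpa [mul_assoc] using K.mul_mem (K.mul_mem (K.inv_mem hb) hac) hd

lemma exists_mem_inter (hg : IsMinuscule K g w)
    (hx : x ∈ doubleCoset (g * w * g⁻¹) (K : Set G) K) :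
    ∃ y ∈ doubleCoset g (K : Set G) K, x⁻¹ * y ∈ doubleCoset g (K : Set G) K := by
  obtain ⟨k, hk, l, hl, rfl⟩ := mem_doubleCoset.1 hx
  refine ⟨k * g, (mul_mem_doubleCoset_iff_left hk).2 (mem_doubleCoset_self K K g), ?_⟩
  refine mem_doubleCoset.2 ⟨l⁻¹, K.inv_mem hl, w⁻¹, K.inv_mem hg.weyl_mem, ?_⟩
  group

lemma notMem (hg : IsMinuscule K g w) (hx : x ∈ doubleCoset (g * w * g⁻¹) (K : Set G) K) :
    x ∉ K := by
  obtain ⟨k, hk, l, hl, rfl⟩ := mem_doubleCoset.1 hx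
  rw [mul_mem_cancel_right hl, mul_mem_cancel_left hk]
  exact hg.conj_weyl_notMem

end IsMinuscule

end Minuscule

section Convolution

variable {G : Type*} [Group G] [MeasurableSpace G] [MeasurableMul G] {K : Subgroup G} {g w : G}

lemma IsMinuscule.measureReal_inter_smul (hg : IsMinuscule K g w) (μ : Measure G)
    [μ.IsMulLeftInvariant] (hK : MeasurableSet (K : Set G)) (hμ : μ K = 1)
    (hfin : (MulAut.conj g • K).relIndex K ≠ 0) (x : G) :
    μ.real (doubleCoset g (K : Set G) K ∩ x • doubleCoset g (K : Set G) K) =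
      (MulAut.conj g • K).relIndex K * (K : Set G).indicator 1 x +
        (doubleCoset (g * w * g⁻¹) (K : Set G) K).indicator 1 x := by
  by_cases hxK : x ∈ K
  · have hx : x ∉ doubleCoset (g * w * g⁻¹) (K : Set G) K := fun hx => hg.notMem hx hxK
    have : x • doubleCoset g (K : Set G) K = doubleCoset g K K := by
      ext y
      rw [Set.mem_smul_set_iff_inv_smul_mem, smul_eq_mul,
        mul_mem_doubleCoset_iff_left (K.inv_mem hxK)]
    simp [this, hx, hxK, measureReal_def, measure_doubleCoset μ hK hfin, hμ]
  rw [Set.indicator_of_notMem (SetLike.mem_coe.not.2 hxK), mul_zero, zero_add]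
  by_cases hx : x ∈ doubleCoset (g * w * g⁻¹) (K : Set G) K
  · obtain ⟨y, hy, hxy⟩ := hg.exists_mem_inter hx
    have : doubleCoset g (K : Set G) K ∩ x • doubleCoset g (K : Set G) K = y • (K : Set G) := by
      ext z
      rw [Set.mem_inter_iff, Set.mem_smul_set_iff_inv_smul_mem, Set.mem_smul_set_iff_inv_smul_mem]
      refine ⟨fun hz => hg.inv_mul_mem hxK hy hxy hz.1 hz.2, fun hz => ?_⟩
      rw [← mul_mem_doubleCoset_iff_right hz] at hy hxy
      simpa [mul_assoc] using And.intro hy hxy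
    simp [this, hx, measureReal_def, hμ]
  · suffices doubleCoset g (K : Set G) K ∩ x • doubleCoset g (K : Set G) K = ∅ by simp [this, hx]
    refine Set.eq_empty_of_forall_notMem fun y hy => ?_
    exact hx (mem_doubleCoset_of_mem_inter hg.isTwoTransitiveOn_inv hxK hy.1
      (Set.mem_smul_set_iff_inv_smul_mem.1 hy.2))

theorem IsMinuscule.integral_indicator_mul_indicator (hg : IsMinuscule K g w) (μ : Measure G)
    [μ.IsMulLeftInvariant] (hK : MeasurableSet (K : Set G)) (hμ : μ K = 1)
    (hfin : (MulAut.conj g • K).relIndex K ≠ 0) (x : G) :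
    ∫ y, (doubleCoset g (K : Set G) K).indicator (1 : G → ℝ) y *
        (doubleCoset g⁻¹ (K : Set G) K).indicator (1 : G → ℝ) (y⁻¹ * x) ∂μ =
      (MulAut.conj g • K).relIndex K * (K : Set G).indicator (1 : G → ℝ) x +
        (doubleCoset (g * w * g⁻¹) (K : Set G) K).indicator (1 : G → ℝ) x := by
  have hS := measurableSet_doubleCoset hK hfin
  rw [← doubleCoset_inv, integral_indicator_mul_indicator_inv_mul μ hS (by rwa [inv_inv]), inv_inv]
  exact hg.measureReal_inter_smul μ hK hμ hfin x

end Convolution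

section MultiplyTransitive

lemma mem_comap_stabilizer_or_mem_doubleCoset {G H X : Type*} [Group G] [Group H] [MulAction H X]
    [MulAction.IsMultiplyPretransitive H X 2] {f : G →* H} (hf : Function.Surjective f) {x : X}
    {w : G} (hw : f w • x ≠ x) (g : G) :
    g ∈ (MulAction.stabilizer H x).comap f ∨ g ∈ doubleCoset w
      ((MulAction.stabilizer H x).comap f : Set G) ((MulAction.stabilizer H x).comap f) := by
  refine or_iff_not_imp_left.2 fun hg => ?_
  rw [Subgroup.mem_comap, MulAction.mem_stabilizer_iff] at hg
  obtain ⟨h, hx, hwx⟩ := MulAction.is_two_pretransitive_iff.1 ‹_› (Ne.symm hw) (Ne.symm hg)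
  obtain ⟨a, rfl⟩ := hf h
  refine mem_doubleCoset.2 ⟨a, hx, (a * w)⁻¹ * g, ?_, by group⟩
  rw [SetLike.mem_coe, Subgroup.mem_comap, MulAction.mem_stabilizer_iff, map_mul, map_inv, mul_smul,
    inv_smul_eq_iff, map_mul, mul_smul, hwx]

end MultiplyTransitive

variable {n : Type*} [Fintype n] [DecidableEq n]

section ProjectiveSpace

variable {k : Type*} [Field k]

instance isMultiplyPretransitive_projectivization :
    MulAction.IsMultiplyPretransitive (GL n k) (ℙ k (n → k)) 2 := by
  let f : ℙ k (n → k) →ₑ[(GeneralLinearGroup.toLin (n := n) (R := k)).symm] ℙ k (n → k) :=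
    { toFun := id
      map_smul' := fun g x => by
        obtain ⟨A, rfl⟩ := GeneralLinearGroup.toLin.surjective g
        rw [MulEquiv.symm_apply_apply]
        induction x with | h v hv => rfl }
  exact MulAction.IsPretransitive.of_embedding (f := f) Function.surjective_id

variable (k) in
/-- The point of projective space spanned by the `i`-th coordinate vector. -/
def coordPoint (i : n) : ℙ k (n → k) := .mk k (Pi.single i 1) (by simp)

lemma smul_coordPoint_eq_iff {g : GL n k} {i j : n} :
    g • coordPoint k i = coordPoint k j ↔ ∀ r ≠ j, g r i = 0 := by
  rw [coordPoint, coordPoint, Projectivization.smul_mk, Projectivization.mk_eq_mk_iff']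
  have hcol : g • (Pi.single i 1 : n → k) = fun r => g r i := by
    ext r
    exact congrFun (Matrix.mulVec_single_one g.1 i) r
  rw [hcol]
  constructor
  · rintro ⟨a, ha⟩ r hr
    simpa [hr] using (congrFun ha r).symm
  · refine fun h => ⟨g j i, funext fun r => ?_⟩
    by_cases hr : r = j
    · simp [hr]
    · simp [hr, h r hr]

lemma swap_smul_coordPoint_ne {i j : n} (hij : i ≠ j) :
    GeneralLinearGroup.swap k i j • coordPoint k i ≠ coordPoint k i := by
  rw [Ne, smul_coordPoint_eq_iff]
  refine fun h => one_ne_zero (α := k) ?_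
  simpa [Matrix.swap, PEquiv.toMatrix_apply] using h j hij.symm

end ProjectiveSpace

section Residue

variable {R : Type*} [CommRing R] [IsLocalRing R]

lemma map_residue_surjective :
    Function.Surjective (GeneralLinearGroup.map (n := n) (residue R)) := by
  intro g
  choose A hA using fun r c => IsLocalRing.residue_surjective (g r c)
  have hAg : (residue R).mapMatrix (Matrix.of A) = g := Matrix.ext hA
  have hdet : IsUnit (Matrix.of A).det := by
    rw [← IsLocalRing.residue_ne_zero_iff_isUnit, RingHom.map_det, hAg]
    exact g.det_ne_zero
  exact ⟨GeneralLinearGroup.mk'' _ hdet, Units.ext hAg⟩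

end Residue

section Integral

variable (n) (R F : Type*) [CommRing R] [Field F] [Algebra R F]

/-- The group `GL n R`, viewed as the image of `GL n R` inside `GL n F`. -/
def integralGL : Subgroup (GL n F) := (GeneralLinearGroup.map (algebraMap R F)).range

variable {n R F}

lemma apply_mem_range_of_mem_integralGL {x : GL n F} (hx : x ∈ integralGL n R F) (r c : n) :
    x r c ∈ (algebraMap R F).range := by
  obtain ⟨γ, rfl⟩ := hx
  exact ⟨γ r c, rfl⟩

lemma mem_integralGL_iff [FaithfulSMul R F] {x : GL n F} : x ∈ integralGL n R F ↔
    (∀ r c, x r c ∈ (algebraMap R F).range) ∧ ∃ u : Rˣ, algebraMap R F u = x.1.det := by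
  constructor
  · rintro ⟨γ, rfl⟩
    exact ⟨fun r c => ⟨γ r c, rfl⟩, γ.det, (algebraMap R F).map_det γ.1⟩
  · rintro ⟨hx, u, hu⟩
    choose A hA using hx
    have hAx : (algebraMap R F).mapMatrix (Matrix.of A) = x := Matrix.ext hA
    have hdet : (Matrix.of A).det = u := by
      apply FaithfulSMul.algebraMap_injective R F
      rw [RingHom.map_det, hAx, hu]
    exact ⟨GeneralLinearGroup.mk'' _ (hdet ▸ u.isUnit), Units.ext hAx⟩

lemma mem_integralGL_of_det_eq [FaithfulSMul R F] {x y : GL n F} (hy : y ∈ integralGL n R F)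
    (hdet : x.det = y.det) (hx : ∀ r c, x r c ∈ (algebraMap R F).range) : x ∈ integralGL n R F := by
  obtain ⟨-, u, hu⟩ := mem_integralGL_iff.1 hy
  exact mem_integralGL_iff.2 ⟨hx, u, hu.trans (congrArg Units.val hdet).symm⟩

lemma swap_mem_integralGL (i j : n) : GeneralLinearGroup.swap F i j ∈ integralGL n R F :=
  ⟨GeneralLinearGroup.swap R i j, GeneralLinearGroup.map_swap _ i j⟩

end Integral

section Diagonal

variable {F : Type*} [Field F]

/-- Diagonal matrices, as a homomorphism from the torus `n → Fˣ` to `GL n F`. -/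
def diagGL : (n → Fˣ) →* GL n F :=
  (Units.map (Matrix.diagonalRingHom n F).toMonoidHom).comp MulEquiv.piUnits.symm.toMonoidHom

lemma coe_diagGL (u : n → Fˣ) : (diagGL u : Matrix n n F) = Matrix.diagonal fun i => (u i : F) :=
  rfl

lemma diagGL_mul_mul_diagGL_apply (u v : n → Fˣ) (x : GL n F) (r c : n) :
    (diagGL u * x * diagGL v) r c = u r * x r c * v c := by
  rw [GeneralLinearGroup.coe_mul, GeneralLinearGroup.coe_mul, coe_diagGL, coe_diagGL,
    Matrix.mul_diagonal, Matrix.diagonal_mul]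

lemma swap_mul_diagGL (i j : n) (u : n → Fˣ) :
    GeneralLinearGroup.swap F i j * diagGL u =
      diagGL (u ∘ Equiv.swap i j) * GeneralLinearGroup.swap F i j := by
  ext r c
  rw [Units.val_mul, Units.val_mul, coe_diagGL, coe_diagGL, Matrix.mul_diagonal,
    Matrix.diagonal_mul]
  rcases eq_or_ne (Equiv.swap i j r) c with rfl | h
  · exact mul_comm _ _
  · have : (GeneralLinearGroup.swap F i j) r c = 0 := by
      simp [Matrix.swap, PEquiv.toMatrix_apply, h]
    rw [this, zero_mul, mul_zero]

/-- The diagonal matrix with a given entry at the `i`-th place and `1` elsewhere. -/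
def dilation (i : n) : Fˣ →* GL n F := diagGL.comp (MonoidHom.mulSingle (fun _ => Fˣ) i)

lemma dilation_apply (i : n) (u : Fˣ) : dilation i u = diagGL (Pi.mulSingle i u) := rfl

lemma dilation_mul_mul_inv_apply (i : n) (u : Fˣ) (x : GL n F) (r c : n) :
    (dilation i u * x * (dilation i u)⁻¹) r c =
      (Pi.mulSingle i u : n → Fˣ) r * x r c * ↑((Pi.mulSingle i u : n → Fˣ) c)⁻¹ := by
  rw [dilation_apply, ← map_inv, diagGL_mul_mul_diagGL_apply, Pi.inv_apply]

lemma mul_dilation_apply_of_ne (x : GL n F) (u : Fˣ) (r : n) {i c : n} (hc : c ≠ i) :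
    (x * dilation i u) r c = x r c := by
  rw [Units.val_mul, dilation_apply, coe_diagGL, Matrix.mul_diagonal, Pi.mulSingle_eq_of_ne hc,
    Units.val_one, mul_one]

lemma swap_mul_dilation (i j : n) (u : Fˣ) :
    GeneralLinearGroup.swap F i j * dilation i u =
      dilation j u * GeneralLinearGroup.swap F i j := by
  rw [dilation_apply, dilation_apply, swap_mul_diagGL, Pi.mulSingle_comp_equiv, Equiv.symm_swap,
    Equiv.swap_apply_left]

lemma dilation_mul_swap_mul_inv (i j : n) (u : Fˣ) :
    dilation i u * GeneralLinearGroup.swap F i j * (dilation i u)⁻¹ =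
      dilation i u * (dilation j u)⁻¹ * GeneralLinearGroup.swap F i j := by
  rw [mul_assoc, mul_assoc, mul_right_inj, eq_inv_mul_iff_mul_eq, ← mul_assoc, ← swap_mul_dilation,
    mul_inv_cancel_right]

lemma doubleCoset_dilation_eq {R : Type*} [CommRing R] [Algebra R F] (i j : n) (u : Fˣ) :
    doubleCoset (dilation j u) (integralGL n R F : Set (GL n F)) (integralGL n R F) =
      doubleCoset (dilation i u) (integralGL n R F : Set (GL n F)) (integralGL n R F) := by
  refine doubleCoset_eq_of_mem (mem_doubleCoset.2 ⟨_, swap_mem_integralGL i j, _,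
    inv_mem (swap_mem_integralGL i j), ?_⟩)
  rw [swap_mul_dilation, mul_inv_cancel_right]

end Diagonal

section Contragredient

variable {A : Type*} [CommRing A]

/-- The automorphism `x ↦ (x⁻¹)ᵀ` of `GL n A`. It stabilises the integral matrices and inverts the
diagonal ones, and so transfers statements about `dilation i u` to its inverse. -/
def contragredient : MulAut (GL n A) where
  toFun x := ⟨(x⁻¹).1ᵀ, x.1ᵀ, by simp [← Matrix.transpose_mul], by simp [← Matrix.transpose_mul]⟩
  invFun x := ⟨(x⁻¹).1ᵀ, x.1ᵀ, by simp [← Matrix.transpose_mul], by simp [← Matrix.transpose_mul]⟩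
  left_inv x := rfl
  right_inv x := rfl
  map_mul' x y := Units.ext (by simp [Matrix.transpose_mul])

lemma contragredient_swap (i j : n) :
    contragredient (GeneralLinearGroup.swap A i j) = GeneralLinearGroup.swap A i j :=
  Units.ext (Matrix.transpose_swap i j)

variable {R F : Type*} [CommRing R] [Field F] [Algebra R F]

lemma contragredient_diagGL (u : n → Fˣ) : contragredient (diagGL u) = (diagGL u)⁻¹ := by
  rw [← map_inv]
  exact Units.ext (Matrix.diagonal_transpose _)

lemma contragredient_smul_integralGL :
    (contragredient : MulAut (GL n F)) • integralGL n R F = integralGL n R F := by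
  ext x
  rw [Subgroup.mem_smul_pointwise_iff_exists]
  constructor
  · rintro ⟨_, ⟨γ, rfl⟩, rfl⟩
    exact ⟨contragredient γ, rfl⟩
  · rintro ⟨γ, rfl⟩
    exact ⟨_, ⟨contragredient γ, rfl⟩, rfl⟩

end Contragredient

section Uniformizer

variable {R F : Type*} [CommRing R] [IsLocalRing R] [Field F] [Algebra R F]

variable (R) in
/-- The unit `ϖ` of `F` is the image of a generator of the maximal ideal of `R`. -/
def IsUniformizer (ϖ : Fˣ) : Prop :=
  ∃ t : R, maximalIdeal R = Ideal.span {t} ∧ algebraMap R F t = ϖ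

lemma IsUniformizer.mem_range {ϖ : Fˣ} (hϖ : IsUniformizer R ϖ) :
    (ϖ : F) ∈ (algebraMap R F).range :=
  let ⟨t, _, ht⟩ := hϖ; ⟨t, ht⟩

lemma IsUniformizer.mulSingle_mem_range {ι : Type*} [DecidableEq ι] {ϖ : Fˣ}
    (hϖ : IsUniformizer R ϖ) (i r : ι) :
    ((Pi.mulSingle i ϖ : ι → Fˣ) r : F) ∈ (algebraMap R F).range := by
  rw [Pi.mulSingle_apply]
  split_ifs
  · exact hϖ.mem_range
  · exact one_mem _

lemma IsUniformizer.algebraMap_mul_inv_mem_range_iff [FaithfulSMul R F] {ϖ : Fˣ}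
    (hϖ : IsUniformizer R ϖ) {a : R} :
    algebraMap R F a * ↑ϖ⁻¹ ∈ (algebraMap R F).range ↔ residue R a = 0 := by
  obtain ⟨t, ht, htϖ⟩ := hϖ
  rw [IsLocalRing.residue_eq_zero_iff, ht, Ideal.mem_span_singleton']
  refine exists_congr fun b => ?_
  rw [Units.eq_mul_inv_iff_mul_eq, ← htϖ, ← map_mul,
    (FaithfulSMul.algebraMap_injective R F).eq_iff]

variable [FaithfulSMul R F] {ϖ : Fˣ} {i j : n}

lemma map_mem_conj_dilation_inv_iff (hϖ : IsUniformizer R ϖ) (γ : GL n R) :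
    GeneralLinearGroup.map (algebraMap R F) γ ∈
        MulAut.conj (dilation i ϖ)⁻¹ • integralGL n R F ↔
      GeneralLinearGroup.map (residue R) γ ∈
        MulAction.stabilizer (GL n (ResidueField R)) (coordPoint (ResidueField R) i) := by
  rw [mem_conj_smul_iff, inv_inv, MulAction.mem_stabilizer_iff, smul_coordPoint_eq_iff]
  constructor
  · intro h r hr
    have := apply_mem_range_of_mem_integralGL h r i
    rw [dilation_mul_mul_inv_apply, Pi.mulSingle_eq_same, Pi.mulSingle_eq_of_ne hr, Units.val_one,
      one_mul] at this
    exact hϖ.algebraMap_mul_inv_mem_range_iff.1 this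
  · intro h
    refine mem_integralGL_of_det_eq ⟨γ, rfl⟩ (by simp) fun r c => ?_
    rw [dilation_mul_mul_inv_apply]
    rcases eq_or_ne c i with rfl | hc
    · rcases eq_or_ne r c with rfl | hr
      · refine ⟨γ r r, ?_⟩
        rw [Pi.mulSingle_eq_same, mul_comm, Units.inv_mul_cancel_left]
        rfl
      · rw [Pi.mulSingle_eq_same, Pi.mulSingle_eq_of_ne hr, Units.val_one, one_mul]
        exact hϖ.algebraMap_mul_inv_mem_range_iff.2 (h r hr)
    · rw [Pi.mulSingle_eq_of_ne hc, inv_one, Units.val_one, mul_one]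
      exact mul_mem (hϖ.mulSingle_mem_range i r) ⟨γ r c, rfl⟩

lemma isTwoTransitiveOn_dilation_inv (hϖ : IsUniformizer R ϖ) (hij : i ≠ j) :
    IsTwoTransitiveOn (integralGL n R F) (dilation i ϖ)⁻¹ (GeneralLinearGroup.swap F i j) := by
  rintro _ ⟨γ, rfl⟩
  have hswap : GeneralLinearGroup.map (residue R) (GeneralLinearGroup.swap R i j) •
      coordPoint (ResidueField R) i ≠ coordPoint (ResidueField R) i := by
    rw [GeneralLinearGroup.map_swap]
    exact swap_smul_coordPoint_ne hij
  refine (mem_comap_stabilizer_or_mem_doubleCoset map_residue_surjective hswap γ).imp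
    (map_mem_conj_dilation_inv_iff hϖ γ).2 fun hγ => ?_
  obtain ⟨a, ha, b, hb, rfl⟩ := mem_doubleCoset.1 hγ
  refine mem_doubleCoset.2 ⟨_, ⟨⟨a, rfl⟩, (map_mem_conj_dilation_inv_iff hϖ a).2 ha⟩,
    _, ⟨⟨b, rfl⟩, (map_mem_conj_dilation_inv_iff hϖ b).2 hb⟩, ?_⟩
  rw [map_mul, map_mul, GeneralLinearGroup.map_swap]

lemma isTwoTransitiveOn_dilation (hϖ : IsUniformizer R ϖ) (hij : i ≠ j) :
    IsTwoTransitiveOn (integralGL n R F) (dilation i ϖ) (GeneralLinearGroup.swap F i j) := by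
  have := (isTwoTransitiveOn_dilation_inv (F := F) hϖ hij).smul contragredient
  rwa [contragredient_smul_integralGL, contragredient_swap, map_inv, dilation_apply,
    contragredient_diagGL, inv_inv] at this

lemma relIndex_conj_dilation_inv (hϖ : IsUniformizer R ϖ) :
    (MulAut.conj (dilation i ϖ)⁻¹ • integralGL n R F).relIndex (integralGL n R F) =
      Nat.card (ℙ (ResidueField R) (n → ResidueField R)) := by
  have hcomap : (MulAut.conj (dilation i ϖ)⁻¹ • integralGL n R F).comap
      (GeneralLinearGroup.map (algebraMap R F)) =
      (MulAction.stabilizer (GL n (ResidueField R)) (coordPoint (ResidueField R) i)).comap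
        (GeneralLinearGroup.map (residue R)) := by
    ext γ
    rw [Subgroup.mem_comap, Subgroup.mem_comap, map_mem_conj_dilation_inv_iff hϖ]
  have : MulAction.IsPretransitive (GL n (ResidueField R))
      (ℙ (ResidueField R) (n → ResidueField R)) :=
    MulAction.isPretransitive_of_is_two_pretransitive
  rw [← MulAction.index_stabilizer_of_transitive (GL n (ResidueField R))
    (coordPoint (ResidueField R) i), ← Subgroup.index_comap_of_surjective _ map_residue_surjective,
    ← hcomap, ← Subgroup.relIndex_top_right, Subgroup.relIndex_comap, ← MonoidHom.range_eq_map]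
  rfl

lemma relIndex_conj_dilation (hϖ : IsUniformizer R ϖ) :
    (MulAut.conj (dilation i ϖ) • integralGL n R F).relIndex (integralGL n R F) =
      Nat.card (ℙ (ResidueField R) (n → ResidueField R)) := by
  rw [← relIndex_conj_dilation_inv hϖ (F := F) (i := i),
    ← Subgroup.relIndex_pointwise_smul (contragredient : MulAut (GL n F)), smul_conj_smul,
    contragredient_smul_integralGL, dilation_apply, contragredient_diagGL]

end Uniformizer

section IntegralDilation

variable {R F : Type*} [CommRing R] [IsLocalRing R] [Field F] [Algebra R F] {ϖ : Fˣ} {i j : n}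

lemma dilation_apply_mem_range (hϖ : IsUniformizer R ϖ) (r c : n) :
    dilation i ϖ r c ∈ (algebraMap R F).range := by
  rw [dilation_apply, coe_diagGL, Matrix.diagonal_apply]
  split_ifs
  · exact hϖ.mulSingle_mem_range i r
  · exact zero_mem _

lemma apply_mem_range_of_mem_doubleCoset_dilation (hϖ : IsUniformizer R ϖ) {x : GL n F}
    (hx : x ∈ doubleCoset (dilation i ϖ) (integralGL n R F : Set (GL n F)) (integralGL n R F))
    (r c : n) : x r c ∈ (algebraMap R F).range := by
  obtain ⟨a, ha, b, hb, rfl⟩ := mem_doubleCoset.1 hx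
  rw [Units.val_mul, Units.val_mul, Matrix.mul_apply]
  refine sum_mem fun s _ => mul_mem ?_ (apply_mem_range_of_mem_integralGL hb s c)
  rw [Matrix.mul_apply]
  exact sum_mem fun t _ =>
    mul_mem (apply_mem_range_of_mem_integralGL ha r t) (dilation_apply_mem_range hϖ t s)

variable [FaithfulSMul R F]

lemma mem_integralGL_of_mul_dilation_mem (hϖ : IsUniformizer R ϖ) (hij : i ≠ j) {x : GL n F}
    (hi : x * dilation i ϖ ∈
      doubleCoset (dilation i ϖ) (integralGL n R F : Set (GL n F)) (integralGL n R F))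
    (hj : x * dilation j ϖ ∈
      doubleCoset (dilation j ϖ) (integralGL n R F : Set (GL n F)) (integralGL n R F)) :
    x ∈ integralGL n R F := by
  obtain ⟨a, ha, b, hb, hab⟩ := mem_doubleCoset.1 hi
  have hdet : x.det = (a * b).det := by
    have := congrArg GeneralLinearGroup.det hab
    simp only [map_mul] at this ⊢
    rwa [mul_right_comm, mul_left_inj] at this
  refine mem_integralGL_of_det_eq (mul_mem ha hb) hdet fun r c => ?_
  rcases ne_or_eq c i with hc | rfl
  · rw [← mul_dilation_apply_of_ne x ϖ r hc]
    exact apply_mem_range_of_mem_doubleCoset_dilation hϖ hi r c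
  · rw [← mul_dilation_apply_of_ne x ϖ r hij]
    exact apply_mem_range_of_mem_doubleCoset_dilation hϖ hj r c

theorem isMinuscule_dilation (hϖ : IsUniformizer R ϖ) (hij : i ≠ j) :
    IsMinuscule (integralGL n R F) (dilation i ϖ) (GeneralLinearGroup.swap F i j) where
  weyl_mem := swap_mem_integralGL i j
  conj_weyl_notMem h := by
    rw [← GeneralLinearGroup.map_swap (algebraMap R F)] at h
    refine swap_smul_coordPoint_ne (k := ResidueField R) hij ?_
    rw [← GeneralLinearGroup.map_swap (residue R)]
    exact (map_mem_conj_dilation_inv_iff hϖ _).1 (mem_conj_smul_iff.2 (by rwa [inv_inv]))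
  isTwoTransitiveOn := isTwoTransitiveOn_dilation hϖ hij
  isTwoTransitiveOn_inv := isTwoTransitiveOn_dilation_inv hϖ hij
  mem_of_mul_mem x hi hj := by
    rw [mul_assoc, swap_mul_dilation, ← mul_assoc,
      mul_mem_doubleCoset_iff_right (swap_mem_integralGL i j), ← doubleCoset_dilation_eq i j] at hj
    exact mem_integralGL_of_mul_dilation_mem hϖ hij hi hj

theorem statement2_general [Finite (ResidueField R)] [MeasurableSpace (GL n F)]
    [MeasurableMul (GL n F)] (μ : Measure (GL n F)) [μ.IsMulLeftInvariant]
    (hK : MeasurableSet (integralGL n R F : Set (GL n F))) (hμ : μ (integralGL n R F) = 1)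
    (hϖ : IsUniformizer R ϖ) (hij : i ≠ j) (x : GL n F) :
    ∫ y, (doubleCoset (dilation i ϖ) (integralGL n R F : Set (GL n F))
          (integralGL n R F)).indicator (1 : GL n F → ℝ) y *
        (doubleCoset (dilation i ϖ)⁻¹ (integralGL n R F : Set (GL n F))
          (integralGL n R F)).indicator (1 : GL n F → ℝ) (y⁻¹ * x) ∂μ =
      Nat.card (ℙ (ResidueField R) (n → ResidueField R)) *
          (integralGL n R F : Set (GL n F)).indicator (1 : GL n F → ℝ) x +
        (doubleCoset (dilation i ϖ * (dilation j ϖ)⁻¹) (integralGL n R F : Set (GL n F))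
          (integralGL n R F)).indicator (1 : GL n F → ℝ) x := by
  have hcard := relIndex_conj_dilation (n := n) (i := i) hϖ
  have hfin : (MulAut.conj (dilation i ϖ) • integralGL n R F).relIndex (integralGL n R F) ≠ 0 := by
    have : Nonempty (ℙ (ResidueField R) (n → ResidueField R)) := ⟨coordPoint _ i⟩
    rw [hcard]
    exact Nat.card_pos.ne'
  have := (isMinuscule_dilation hϖ hij).integral_indicator_mul_indicator μ hK hμ hfin x
  rwa [hcard, dilation_mul_swap_mul_inv, doubleCoset_mul_right (swap_mem_integralGL i j)] at this

end IntegralDilation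

section Padic

/-- The prime `p`, as an element of the unit group of `ℚ_[p]`. -/
def padicUniformizer : ℚ_[p]ˣ := Units.mk0 p (NeZero.ne _)

lemma isUniformizer_padicUniformizer : IsUniformizer ℤ_[p] (padicUniformizer p) :=
  ⟨p, PadicInt.maximalIdeal_eq_span_p, map_natCast _ p⟩

instance finite_residueField_padicInt : Finite (ResidueField ℤ_[p]) :=
  .of_equiv (ZMod p) PadicInt.residueField.symm.toEquiv

lemma card_projectivization_residueField_padicInt :
    Nat.card (ℙ (ResidueField ℤ_[p]) (Fin 3 → ResidueField ℤ_[p])) = p ^ 2 + p + 1 := by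
  rw [Projectivization.card_of_finrank _ _ (Module.finrank_fin_fun _),
    Nat.card_congr PadicInt.residueField.toEquiv, Nat.card_zmod]
  simp only [Finset.sum_range_succ, Finset.sum_range_zero]
  ring

variable {p} in
lemma mem_range_algebraMap_padicInt_iff {x : ℚ_[p]} :
    x ∈ (algebraMap ℤ_[p] ℚ_[p]).range ↔ ‖x‖ ≤ 1 :=
  ⟨fun ⟨a, ha⟩ => ha ▸ a.norm_le_one, fun hx => ⟨⟨x, hx⟩, rfl⟩⟩

variable {p} in
lemma exists_units_algebraMap_padicInt_eq_iff {x : ℚ_[p]} :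
    (∃ u : ℤ_[p]ˣ, algebraMap ℤ_[p] ℚ_[p] u = x) ↔ ‖x‖ = 1 :=
  ⟨fun ⟨u, hu⟩ => hu ▸ PadicInt.norm_units u, fun hx => ⟨PadicInt.mkUnits hx, rfl⟩⟩

lemma isClosed_integralGL_padicInt :
    IsClosed (integralGL n ℤ_[p] ℚ_[p] : Set (GL n ℚ_[p])) := by
  have : (integralGL n ℤ_[p] ℚ_[p] : Set (GL n ℚ_[p])) =
      (⋂ (r) (c), {x | ‖x r c‖ ≤ 1}) ∩ {x | ‖x.1.det‖ = 1} := by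
    ext x
    simp only [SetLike.mem_coe, mem_integralGL_iff, mem_range_algebraMap_padicInt_iff,
      exists_units_algebraMap_padicInt_eq_iff, Set.mem_inter_iff, Set.mem_iInter,
      Set.mem_ofPred_eq]
  rw [this]
  refine .inter (isClosed_iInter fun r => isClosed_iInter fun c => ?_) ?_
  · exact isClosed_le (Units.continuous_val.matrix_elem r c).norm continuous_const
  · exact isClosed_eq Units.continuous_val.matrix_det.norm continuous_const

instance borelSpace_GL_padic : BorelSpace (GL (Fin 3) ℚ_[p]) := ⟨rfl⟩

lemma padicDiag_eq_dilation (a b c : ℤ) :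
    padicDiag p a b c = dilation 0 (padicUniformizer p ^ a) *
      dilation 1 (padicUniformizer p ^ b) * dilation 2 (padicUniformizer p ^ c) := by
  rw [dilation_apply, dilation_apply, dilation_apply, ← map_mul, ← map_mul]
  refine Units.ext ((congrArg Matrix.diagonal (funext fun i => ?_)).trans (coe_diagGL _).symm)
  fin_cases i <;> simp [padicUniformizer]

lemma padicPhi_eq_indicator (a b c : ℤ) :
    padicPhi p a b c = (doubleCoset (padicDiag p a b c)
      (integralGL (Fin 3) ℤ_[p] ℚ_[p] : Set (GL (Fin 3) ℚ_[p]))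
      (integralGL (Fin 3) ℤ_[p] ℚ_[p])).indicator 1 :=
  congrArg (Set.indicator · 1) (Set.ext fun _ => mem_doubleCoset.symm)

end Padic

/-- `Φ_p(1,0,0) * Φ_p(−1,0,0) = (p² + p + 1) Φ_p(0,0,0) + Φ_p(1,0,−1)`. -/
theorem statement2 (μ : Measure (GL (Fin 3) ℚ_[p])) [μ.IsHaarMeasure]
    (hμ : μ (padicK p) = 1) :
    ∀ x, padicConv p μ (padicPhi p 1 0 0) (padicPhi p (-1) 0 0) x =
      ((p : ℝ) ^ 2 + p + 1) * padicPhi p 0 0 0 x + padicPhi p 1 0 (-1) x := by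
  have hK := (isClosed_integralGL_padicInt (n := Fin 3) p).measurableSet
  have h02 : (0 : Fin 3) ≠ 2 := by decide
  simpa [padicConv, padicPhi_eq_indicator, padicDiag_eq_dilation, doubleCoset_one,
    card_projectivization_residueField_padicInt] using
    statement2_general μ hK hμ (isUniformizer_padicUniformizer p) h02

end
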